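/- Let X be a nonempty Polish space (separable and completely metrizable) equipped with its Borel σ-algebra, and let μ be a σ-finite Borel measure on X with μ({x}) = 0 for every x ∈ X and μ(X) = ∞. Then there exists a Borel isomorphism f : X → ℝ (a bijection such that both f and f⁻¹ are Borel measurable) such that μ(f⁻¹(B)) equals the Lebesgue measure of B for every Borel set B ⊆ ℝ. -/

import Mathlib

open MeasureTheory

noncomputable section

open Set

/-- A measurable map that is injective on a measurable subset of a standard Borel space restricts
to a measurable equivalence of this subset with its image. -/
theorem exists_measurableEquiv_image {X : Type*} [MeasurableSpace X] [StandardBorelSpace X]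
    {s : Set X} (hs : MeasurableSet s) {g : X → ℝ} (hg : Measurable g) (hinj : InjOn g s)
    {D : Set ℝ} (hD : g '' s = D) :
    ∃ e : s ≃ᵐ D, ∀ x : s, (e x : ℝ) = g x := by
  have : StandardBorelSpace s := hs.standardBorel
  have hemb : MeasurableEmbedding (s.domRestrict g) :=
    (hg.comp measurable_subtype_coe).measurableEmbedding (injOn_iff_injective.1 hinj)
  obtain rfl : range (s.domRestrict g) = D := by rw [range_domRestrict, hD]
  exact ⟨hemb.equivRange, fun x => by rw [hemb.equivRange_apply]; rfl⟩

/-- A measurable equivalence between measurable subsets with uncountable complements extends to the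
whole spaces. -/
theorem exists_measurableEquiv_extension {X Y : Type*}
    [MeasurableSpace X] [StandardBorelSpace X] [MeasurableSpace Y] [StandardBorelSpace Y]
    {s : Set X} {t : Set Y} (hs : MeasurableSet s) (ht : MeasurableSet t)
    (hsc : ¬ sᶜ.Countable) (htc : ¬ tᶜ.Countable) (e₀ : s ≃ᵐ t) :
    ∃ e : X ≃ᵐ Y, ∀ x : s, e x = e₀ x := by
  classical
  have : StandardBorelSpace (sᶜ : Set X) := hs.compl.standardBorel
  have : StandardBorelSpace (tᶜ : Set Y) := ht.compl.standardBorel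
  let e₁ : (sᶜ : Set X) ≃ᵐ (tᶜ : Set Y) :=
    PolishSpace.measurableEquivOfNotCountable
      (fun h => hsc (countable_coe_iff.1 h)) (fun h => htc (countable_coe_iff.1 h))
  refine ⟨(MeasurableEquiv.sumCompl hs).symm.trans
    ((e₀.sumCongr e₁).trans (MeasurableEquiv.sumCompl ht)), fun x => ?_⟩
  have hx : (MeasurableEquiv.sumCompl hs).symm (x : X) = Sum.inl x :=
    Equiv.sumCompl_symm_apply_pos (p := (· ∈ s)) x
  rw [MeasurableEquiv.trans_apply, hx]
  rfl

/-- An s-finite measure on an uncountable standard Borel space has an uncountable null set. -/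
theorem exists_uncountable_null_measurableSet {X : Type*} [MeasurableSpace X]
    [StandardBorelSpace X] (hX : ¬ Countable X) (μ : Measure X) [SFinite μ] :
    ∃ M : Set X, MeasurableSet M ∧ μ M = 0 ∧ ¬ M.Countable := by
  have hR : ¬ Countable ℝ := not_countable
  have hRR : ¬ Countable (ℝ × ℝ) := fun h =>
    hR (Function.Injective.countable (f := fun x : ℝ => (x, (0 : ℝ))) fun _ _ h => by simpa using h)
  let e : X ≃ᵐ ℝ × ℝ := PolishSpace.measurableEquivOfNotCountable hX hRR
  let A : ℝ → Set X := fun r => (fun x => (e x).1) ⁻¹' {r}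
  have hA : ∀ r, MeasurableSet (A r) := fun r =>
    e.measurable.fst (measurableSet_singleton r)
  have hcount : {r | 0 < μ (A r)}.Countable :=
    Measure.countable_meas_pos_of_disjoint_iUnion hA fun r r' hrr' =>
      disjoint_left.2 fun x (hx : _ = r) (hx' : _ = r') => hrr' (hx.symm.trans hx')
  obtain ⟨r, hr⟩ : ∃ r, r ∉ {r | 0 < μ (A r)} := by
    by_contra! h
    exact hR (countable_univ_iff.1 (hcount.mono fun r _ => h r))
  refine ⟨A r, hA r, by simpa using hr, fun hc => hR ?_⟩
  have : Countable (A r) := hc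
  exact Function.Injective.countable (f := fun x : ℝ => (⟨e.symm (r, x), by simp [A]⟩ : A r))
    fun _ _ h => by simpa using h

/-- An atomless measure on `ℝ` with finite values on left half-lines, with no mass on the negative
half-line and with infinite total mass is pushed forward to Lebesgue measure on `[0, ∞)` by its
distribution function. -/
theorem map_measureReal_Iic_eq_volume_restrict (ν : Measure ℝ) [NullSingletonClass ν]
    (hfin : ∀ x, ν (Iic x) ≠ ⊤) (hneg : ν (Iio 0) = 0) (hinf : ν univ = ⊤) :
    Measurable (fun x => ν.real (Iic x)) ∧
      ν.map (fun x => ν.real (Iic x)) = volume.restrict (Ici 0) := by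
  set F : ℝ → ℝ := fun x => ν.real (Iic x)
  have hmono : Monotone F := fun x y hxy =>
    measureReal_mono (Iic_subset_Iic.2 hxy) (hfin y)
  have hint : ∀ x, IntegrableOn (fun _ => (1 : ℝ)) (Iic x) ν := fun x =>
    integrableOn_const (hfin x)
  have hcont : Continuous F := by
    have h := intervalIntegral.continuous_primitive (μ := ν) (f := fun _ => (1 : ℝ))
      (fun a b => ((hint (max a b)).mono_set
        fun x hx => hx.2).intervalIntegrable) 0
    have hF' : F = fun x => (∫ _ in (0 : ℝ)..x, (1 : ℝ) ∂ν) + F 0 := by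
      ext x
      rw [← intervalIntegral.integral_Iic_sub_Iic (hint 0) (hint x)]
      simp [F]
    rw [hF']
    exact h.add continuous_const
  have hFn : ∀ x, ENNReal.ofReal (F x) = ν (Iic x) := fun x => ofReal_measureReal (hfin x)
  have hF_neg : F (-1) = 0 := by
    have : ν (Iic (-1)) = 0 :=
      measure_mono_null (fun x (hx : x ≤ -1) => show x < 0 by linarith) hneg
    simp [F, measureReal_def, this]
  have hunbdd : ∀ t, ∃ x, t < F x := by
    by_contra! ⟨t, ht⟩
    have hlim := tendsto_measure_iUnion_atTop (μ := ν) (s := fun n : ℕ => Iic (n : ℝ))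
      fun m n hmn => Iic_subset_Iic.2 (Nat.cast_le.2 hmn)
    have hU : ⋃ n : ℕ, Iic (n : ℝ) = univ :=
      eq_univ_of_forall fun x => mem_iUnion.2 (exists_nat_ge x)
    rw [hU, hinf] at hlim
    have := le_of_tendsto' hlim (b := ENNReal.ofReal t) fun n => by
      rw [Function.comp_apply, ← hFn]
      exact ENNReal.ofReal_le_ofReal (ht n)
    exact ENNReal.ofReal_ne_top (top_le_iff.1 this)
  have hIic : ∀ t, ν.map F (Iic t) = ENNReal.ofReal t := by
    intro t
    rw [Measure.map_apply hcont.measurable measurableSet_Iic]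
    rcases lt_or_ge t 0 with ht | ht
    · have : F ⁻¹' Iic t = ∅ := eq_empty_of_forall_notMem fun x (hx : F x ≤ t) =>
        absurd (measureReal_nonneg (μ := ν) (s := Iic x)) (not_le.2 (hx.trans_lt ht))
      rw [this, measure_empty, ENNReal.ofReal_of_nonpos ht.le]
    · obtain ⟨y, hy⟩ := hunbdd t
      have hbdd : BddAbove (F ⁻¹' Iic t) :=
        ⟨y, fun x (hx : F x ≤ t) => (hmono.reflect_lt (hx.trans_lt hy)).le⟩
      have hne : (F ⁻¹' Iic t).Nonempty := ⟨-1, by simpa [hF_neg] using ht⟩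
      set z := sSup (F ⁻¹' Iic t)
      have hzmem : F z ≤ t := (isClosed_Iic.preimage hcont).csSup_mem hne hbdd
      have hzeq : F z = t := by
        refine le_antisymm hzmem (le_of_not_gt fun hlt => ?_)
        obtain ⟨w, hw, hzw⟩ := ((hcont.continuousAt.eventually_lt_const hlt).filter_mono
          nhdsWithin_le_nhds |>.and (self_mem_nhdsWithin (s := Ioi z))).exists
        exact (not_le.2 hzw) (le_csSup hbdd (show F w ≤ t from le_of_lt hw))
      have : F ⁻¹' Iic t = Iic z :=
        Subset.antisymm (fun x hx => le_csSup hbdd hx) fun x hx => (hmono hx).trans hzmem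
      rw [this, ← hFn, hzeq]
  have hIic' : ∀ t, (volume.restrict (Ici (0 : ℝ))) (Iic t) = ENNReal.ofReal t := by
    intro t
    rw [Measure.restrict_apply measurableSet_Iic, inter_comm, Ici_inter_Iic, Real.volume_Icc,
      sub_zero]
  refine ⟨hcont.measurable, (Measure.ext_of_Ioc _ _ fun a b hab => ?_).symm⟩
  rw [← Iic_sdiff_Iic, measure_sdiff (Iic_subset_Iic.2 hab.le) measurableSet_Iic.nullMeasurableSet
    (by simp [hIic']), measure_sdiff (Iic_subset_Iic.2 hab.le) measurableSet_Iic.nullMeasurableSet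
    (by simp [hIic]), hIic, hIic, hIic', hIic']

/-- An infinite σ-finite atomless measure on a standard Borel space is pushed forward to Lebesgue
measure on `[0, ∞)` by a measurable map which is injective off an uncountable null set. -/
theorem exists_map_eq_volume_restrict_Ici {X : Type*} [MeasurableSpace X] [StandardBorelSpace X]
    (μ : Measure X) [SigmaFinite μ] [NullSingletonClass μ] (hinf : μ univ = ⊤) :
    ∃ (g : X → ℝ) (N : Set X), Measurable g ∧ MeasurableSet N ∧ μ N = 0 ∧ ¬ N.Countable ∧
      InjOn g Nᶜ ∧ μ.map g = volume.restrict (Ici 0) := by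
  have hX : ¬ Countable X := fun _ => by
    simp [(countable_univ (α := X)).measure_zero μ] at hinf
  obtain ⟨M, hM, hM0, hMc⟩ := exists_uncountable_null_measurableSet hX μ
  let φ : X → ℝ := fun x => spanningSetsIndex μ x + Real.sigmoid (embeddingReal X x)
  have hφ : Measurable φ :=
    ((measurable_from_top (f := fun n : ℕ => (n : ℝ))).comp
      (measurableSet_spanningSetsIndex μ)).add
      (continuous_sigmoid.measurable.comp (measurable_embeddingReal X))
  have hidx : ∀ x, (spanningSetsIndex μ x : ℝ) ≤ φ x ∧ φ x < spanningSetsIndex μ x + 1 := fun x =>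
    ⟨le_add_of_nonneg_right (Real.sigmoid_nonneg _), by
      have := Real.sigmoid_lt_one (embeddingReal X x)
      simp only [φ]; linarith⟩
  have hφinj : Function.Injective φ := by
    intro x y hxy
    have hn : spanningSetsIndex μ x = spanningSetsIndex μ y := by
      have hx := hidx x
      have hy := hidx y
      rw [hxy] at hx
      have h1 : (spanningSetsIndex μ x : ℝ) < spanningSetsIndex μ y + 1 := hx.1.trans_lt hy.2
      have h2 : (spanningSetsIndex μ y : ℝ) < spanningSetsIndex μ x + 1 := hy.1.trans_lt hx.2
      norm_cast at h1 h2
      omega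
    simp only [φ, hn, add_right_inj] at hxy
    exact (measurableEmbedding_embeddingReal X).injective (Real.sigmoid_injective hxy)
  let ν : Measure ℝ := μ.map φ
  have : NullSingletonClass ν := ⟨fun y => by
    rw [Measure.map_apply hφ (measurableSet_singleton y)]
    exact (subsingleton_singleton.preimage hφinj).measure_zero μ⟩
  have hfin : ∀ x, ν (Iic x) ≠ ⊤ := fun x => by
    obtain ⟨n, hn⟩ := exists_nat_ge x
    rw [Measure.map_apply hφ measurableSet_Iic]
    refine measure_ne_top_of_subset (fun y (hy : φ y ≤ x) => ?_)
      (measure_spanningSets_lt_top μ n).ne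
    exact mem_spanningSets_of_index_le μ y (Nat.cast_le.1 ((hidx y).1.trans (hy.trans hn)))
  have hneg : ν (Iio 0) = 0 := by
    rw [Measure.map_apply hφ measurableSet_Iio]
    have : φ ⁻¹' Iio 0 = ∅ := eq_empty_of_forall_notMem fun y (hy : φ y < 0) =>
      absurd ((Nat.cast_nonneg _).trans (hidx y).1) (not_le.2 hy)
    rw [this, measure_empty]
  have hνinf : ν univ = ⊤ := by
    rw [Measure.map_apply hφ MeasurableSet.univ, preimage_univ, hinf]
  obtain ⟨hF, hmap⟩ := map_measureReal_Iic_eq_volume_restrict ν hfin hneg hνinf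
  set F : ℝ → ℝ := fun x => ν.real (Iic x)
  have hmono : Monotone F := fun x y hxy => measureReal_mono (Iic_subset_Iic.2 hxy) (hfin y)
  rw [Measure.map_map hF hφ] at hmap
  have hg := hF.comp hφ
  let C : Set ℝ := range fun q : ℚ => F q
  have hC : C.Countable := countable_range _
  have hC0 : μ ((F ∘ φ) ⁻¹' C) = 0 := by
    rw [← Measure.map_apply hg hC.measurableSet, hmap]
    exact hC.measure_zero _
  have hinj : ∀ x y, F (φ x) = F (φ y) → φ x < φ y → F (φ x) ∈ C := fun x y h hlt => by
    obtain ⟨q, hxq, hqy⟩ := exists_rat_btwn hlt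
    exact ⟨q, le_antisymm (h ▸ hmono hqy.le) (hmono hxq.le)⟩
  refine ⟨F ∘ φ, (F ∘ φ) ⁻¹' C ∪ M, hg, (hg hC.measurableSet).union hM,
    measure_union_null hC0 hM0, fun h => hMc (h.mono subset_union_right), ?_, hmap⟩
  intro x hx y hy hxy
  by_contra hne
  rcases lt_or_gt_of_ne (hφinj.ne hne) with h | h
  · exact hx (Or.inl (hinj x y hxy h))
  · exact hy (Or.inl (hinj y x hxy.symm h))

/-- Two infinite σ-finite atomless measures on standard Borel spaces are isomorphic. -/
theorem exists_measurableEquiv_measurePreserving {X Y : Type*}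
    [MeasurableSpace X] [StandardBorelSpace X] [MeasurableSpace Y] [StandardBorelSpace Y]
    (μ : Measure X) [SigmaFinite μ] [NullSingletonClass μ] (hμ : μ univ = ⊤)
    (ν : Measure Y) [SigmaFinite ν] [NullSingletonClass ν] (hν : ν univ = ⊤) :
    ∃ e : X ≃ᵐ Y, MeasurePreserving e μ ν := by
  obtain ⟨g, N, hg, hN, hN0, hNc, hgN, hgμ⟩ := exists_map_eq_volume_restrict_Ici μ hμ
  obtain ⟨h, P, hh, hP, hP0, hPc, hhP, hhν⟩ := exists_map_eq_volume_restrict_Ici ν hν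
  set vol : Measure ℝ := volume.restrict (Ici 0)
  have hgA : MeasurableSet (g '' Nᶜ) := hN.compl.image_of_measurable_injOn hg hgN
  have hhB : MeasurableSet (h '' Pᶜ) := hP.compl.image_of_measurable_injOn hh hhP
  set D : Set ℝ := g '' Nᶜ ∩ h '' Pᶜ
  have hD : MeasurableSet D := hgA.inter hhB
  have hD0 : vol Dᶜ = 0 := by
    rw [compl_inter]
    refine measure_union_null ?_ ?_
    · rw [← hgμ, Measure.map_apply hg hgA.compl]
      exact measure_mono_null (fun x hx => by_contra fun hxN => hx ⟨x, hxN, rfl⟩) hN0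
    · rw [← hhν, Measure.map_apply hh hhB.compl]
      exact measure_mono_null (fun x hx => by_contra fun hxP => hx ⟨x, hxP, rfl⟩) hP0
  set s : Set X := Nᶜ ∩ g ⁻¹' D
  set t : Set Y := Pᶜ ∩ h ⁻¹' D
  have hs : MeasurableSet s := hN.compl.inter (hg hD)
  have ht : MeasurableSet t := hP.compl.inter (hh hD)
  have hs0 : μ sᶜ = 0 := by
    rw [compl_inter, compl_compl]
    refine measure_union_null hN0 ?_
    rw [← preimage_compl, ← Measure.map_apply hg hD.compl, hgμ, hD0]
  have ht0 : ν tᶜ = 0 := by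
    rw [compl_inter, compl_compl]
    refine measure_union_null hP0 ?_
    rw [← preimage_compl, ← Measure.map_apply hh hD.compl, hhν, hD0]
  have hsD : g '' s = D := by
    rw [image_inter_preimage, inter_eq_right]
    exact inter_subset_left
  have htD : h '' t = D := by
    rw [image_inter_preimage, inter_eq_right]
    exact inter_subset_right
  obtain ⟨a, ha⟩ := exists_measurableEquiv_image hs hg (hgN.mono inter_subset_left) hsD
  obtain ⟨b, hb⟩ := exists_measurableEquiv_image ht hh (hhP.mono inter_subset_left) htD
  obtain ⟨e, he⟩ := exists_measurableEquiv_extension hs ht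
    (fun hc => hNc (hc.mono (subset_compl_comm.1 inter_subset_left)))
    (fun hc => hPc (hc.mono (subset_compl_comm.1 inter_subset_left))) (a.trans b.symm)
  have hes : ∀ x ∈ s, e x ∈ t ∧ h (e x) = g x := fun x hx => by
    have hex := he ⟨x, hx⟩
    simp only at hex
    rw [hex]
    exact ⟨Subtype.coe_prop _, by rw [← hb, ← ha ⟨x, hx⟩]; simp⟩
  refine ⟨e, e.measurable, Measure.ext fun B hB => ?_⟩
  rw [Measure.map_apply e.measurable hB]
  have hI : MeasurableSet (h '' (B ∩ t)) :=
    (hB.inter ht).image_of_measurable_injOn hh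
      (hhP.mono (inter_subset_right.trans inter_subset_left))
  have hX : e ⁻¹' B ∩ s = g ⁻¹' (h '' (B ∩ t)) ∩ s := by
    ext x
    refine and_congr_left fun hx => ⟨fun hxB => ⟨e x, ⟨hxB, (hes x hx).1⟩, (hes x hx).2⟩, ?_⟩
    rintro ⟨y, ⟨hyB, hyt⟩, hy⟩
    have : y = e x := hhP hyt.1 (hes x hx).1.1 (hy.trans (hes x hx).2.symm)
    rwa [mem_preimage, ← this]
  have hY : B ∩ t = h ⁻¹' (h '' (B ∩ t)) ∩ t := by
    ext y
    refine ⟨fun hy => ⟨⟨y, hy, rfl⟩, hy.2⟩, ?_⟩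
    rintro ⟨⟨z, hz, hzy⟩, hyt⟩
    exact hhP hz.2.1 hyt.1 hzy ▸ hz
  calc μ (e ⁻¹' B) = μ (e ⁻¹' B ∩ s) := (measure_inter_conull hs0).symm
    _ = μ (g ⁻¹' (h '' (B ∩ t))) := by rw [hX, measure_inter_conull hs0]
    _ = ν (h ⁻¹' (h '' (B ∩ t))) := by
      rw [← Measure.map_apply hg hI, hgμ, ← hhν, Measure.map_apply hh hI]
    _ = ν (h ⁻¹' (h '' (B ∩ t)) ∩ t) := (measure_inter_conull ht0).symm
    _ = ν B := by rw [← hY, measure_inter_conull ht0]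

theorem stmt19 (X : Type*) [TopologicalSpace X] [PolishSpace X]
    [MeasurableSpace X] [BorelSpace X] [Nonempty X]
    (μ : Measure X) [SigmaFinite μ]
    (hfree : ∀ x : X, μ {x} = 0) (hinf : μ Set.univ = ⊤) :
    ∃ e : X ≃ᵐ ℝ,
      ∀ B : Set ℝ, MeasurableSet B → μ (e ⁻¹' B) = volume B := by
  have : NullSingletonClass μ := ⟨hfree⟩
  obtain ⟨e, he⟩ := exists_measurableEquiv_measurePreserving μ hinf (volume : Measure ℝ)
    Real.volume_univ
  exact ⟨e, fun B hB => he.measure_preimage hB.nullMeasurableSet⟩
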